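/- Assume (A1), (A2) and (SMA) for the continuous-state localization model. Then for every horizon k ≥ 1, every prior density π_0, and every convex function φ : ℝ → ℝ for which the integrals exist, ∫_{ℝ^k} φ(m_1(y_{1:k}, π_0)) σ(π_0, y_{1:k}, 1) dy_{1:k} ≤ ∫_{ℝ^k} φ(m_2(y_{1:k}, π_0)) σ(π_0, y_{1:k}, 2) dy_{1:k}. In particular MSE{m_1(Y^{(1)}_{1:k}, π_0)} ≥ MSE{m_2(Y^{(2)}_{1:k}, π_0)} for all k. -/

import Mathlib

open Finset MeasureTheory

/-- `ψ` is single crossing (from below): once nonnegative it stays nonnegative. -/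
def SingleCrossing {α : Type*} [Preorder α] (ψ : α → ℝ) : Prop :=
  ∀ ⦃x x' : α⦄, x < x' → (0 ≤ ψ x → 0 ≤ ψ x') ∧ (ψ x' ≤ 0 → ψ x ≤ 0)

/-- Cdf of the observation density: `F(y|x) = ∫_{-∞}^y B x`. -/
noncomputable def obsCdf (B : ℝ → ℝ → ℝ) (y x : ℝ) : ℝ :=
  ∫ t in Set.Iic y, B x t

/-- Normalizer `σ(π₀, y_{1:k}) = ∫ π₀(x) Π_t B(x, y_t) dx`. -/
noncomputable def nrm (B : ℝ → ℝ → ℝ) (π₀ : ℝ → ℝ) {k : ℕ} (ys : Fin k → ℝ) : ℝ :=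
  ∫ x, π₀ x * ∏ t, B x (ys t)

/-- Conditional mean `m(y_{1:k}, π₀) = ∫ x π₀(x) Π_t B(x,y_t) dx / σ`. -/
noncomputable def cmean (B : ℝ → ℝ → ℝ) (π₀ : ℝ → ℝ) {k : ℕ} (ys : Fin k → ℝ) : ℝ :=
  (∫ x, x * (π₀ x * ∏ t, B x (ys t))) / nrm B π₀ ys

/-- Mean square error of the conditional mean at horizon `k`. -/
noncomputable def mse (B : ℝ → ℝ → ℝ) (π₀ : ℝ → ℝ) (k : ℕ) : ℝ :=
  ∫ ys : Fin k → ℝ, ∫ x, (x - cmean B π₀ ys) ^ 2 * (π₀ x * ∏ t, B x (ys t))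


open Filter Topology

/-- A Markov density kernel. -/
structure MK {Y : Type*} [MeasureSpace Y] (κ : ℝ → Y → ℝ) : Prop where
  meas : Measurable (Function.uncurry κ)
  nn : ∀ x y, 0 ≤ κ x y
  one : ∀ x, ∫ y, κ x y = 1

lemma MK.int {Y : Type*} [MeasureSpace Y] {κ : ℝ → Y → ℝ} (h : MK κ) (x : ℝ) :
    Integrable (κ x) := by
  by_contra hc
  have := h.one x
  rw [integral_undef hc] at this
  norm_num at this

lemma MK.joint {Y : Type*} [MeasureSpace Y] [SigmaFinite (volume : Measure Y)] {κ : ℝ → Y → ℝ}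
    (h : MK κ) {f : ℝ → ℝ} (hfm : Measurable f) (hf : Integrable f) :
    Integrable (fun p : ℝ × Y => f p.1 * κ p.1 p.2) ((volume : Measure ℝ).prod volume) := by
  have hm : Measurable (fun p : ℝ × Y => f p.1 * κ p.1 p.2) :=
    (hfm.comp measurable_fst).mul h.meas
  rw [integrable_prod_iff hm.aestronglyMeasurable]
  refine ⟨Eventually.of_forall fun x => (h.int x).const_mul (f x), ?_⟩
  have : (fun x => ∫ y, ‖f x * κ x y‖) = fun x => ‖f x‖ := by
    funext x
    have : ∀ y, ‖f x * κ x y‖ = ‖f x‖ * κ x y := fun y => by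
      rw [norm_mul, Real.norm_of_nonneg (h.nn x y)]
    simp_rw [this]
    rw [integral_const_mul, h.one, mul_one]
  simpa only [this] using hf.norm

lemma MK.ae {Y : Type*} [MeasureSpace Y] [SigmaFinite (volume : Measure Y)] {κ : ℝ → Y → ℝ}
    (h : MK κ) {f : ℝ → ℝ} (hfm : Measurable f) (hf : Integrable f) :
    ∀ᵐ y : Y, Integrable (fun x => f x * κ x y) :=
  (h.joint hfm hf).prod_left_ae

lemma MK.marg {Y : Type*} [MeasureSpace Y] [SigmaFinite (volume : Measure Y)] {κ : ℝ → Y → ℝ}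
    (h : MK κ) {f : ℝ → ℝ} (hfm : Measurable f) (hf : Integrable f) :
    Integrable (fun y : Y => ∫ x, f x * κ x y) :=
  (h.joint hfm hf).integral_prod_right

lemma MK.setInt {Y : Type*} [MeasureSpace Y] [SigmaFinite (volume : Measure Y)] {κ : ℝ → Y → ℝ}
    (h : MK κ) {f : ℝ → ℝ} (hfm : Measurable f) (hf : Integrable f) (S : Set Y) :
    ∫ y in S, (∫ x, f x * κ x y) = ∫ x, f x * ∫ y in S, κ x y := by
  have h1 : Integrable (fun p : ℝ × Y => f p.1 * κ p.1 p.2)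
      ((volume : Measure ℝ).prod (volume.restrict S)) := by
    refine (h.joint hfm hf).mono_measure ?_
    exact Measure.prod_mono le_rfl Measure.restrict_le_self
  rw [← integral_integral_swap (f := fun x y => f x * κ x y) h1]
  simp_rw [integral_const_mul]

lemma MK.total {Y : Type*} [MeasureSpace Y] [SigmaFinite (volume : Measure Y)] {κ : ℝ → Y → ℝ}
    (h : MK κ) {f : ℝ → ℝ} (hfm : Measurable f) (hf : Integrable f) :
    ∫ y, (∫ x, f x * κ x y) = ∫ x, f x := by
  have := h.setInt hfm hf Set.univ
  simpa [h.one] using this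

lemma MK.measInt {Y : Type*} [MeasureSpace Y] [SigmaFinite (volume : Measure Y)] {κ : ℝ → Y → ℝ}
    (h : MK κ) {f : ℝ → ℝ} (hfm : Measurable f) :
    Measurable (fun y : Y => ∫ x, f x * κ x y) := by
  have hm : Measurable (fun p : Y × ℝ => f p.2 * κ p.2 p.1) :=
    (hfm.comp measurable_snd).mul (h.meas.comp measurable_swap)
  exact (hm.stronglyMeasurable.integral_prod_right (ν := volume)).measurable

lemma cdf_add {B : ℝ → ℝ → ℝ} (h : MK B) (x : ℝ) (y : ℝ) : obsCdf B y x + ∫ t in Set.Ioi y, B x t = 1 := by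
  rw [← h.one x]
  exact intervalIntegral.integral_Iic_add_Ioi (h.int x).integrableOn (h.int x).integrableOn

lemma cdf_top {B : ℝ → ℝ → ℝ} (h : MK B) (x : ℝ) : Tendsto (fun y => obsCdf B y x) atTop (𝓝 1) := by
  rw [← h.one x]
  exact (aecover_Iic tendsto_id).integral_tendsto_of_countably_generated (h.int x)

lemma cdf_bot {B : ℝ → ℝ → ℝ} (h : MK B) (x : ℝ) : Tendsto (fun y => obsCdf B y x) atBot (𝓝 0) := by
  have h1 : Tendsto (fun y => ∫ t in Set.Ioi y, B x t) atBot (𝓝 1) := by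
    rw [← h.one x]
    exact (aecover_Ioi tendsto_id).integral_tendsto_of_countably_generated (h.int x)
  have : (fun y => obsCdf B y x) = fun y => 1 - ∫ t in Set.Ioi y, B x t := by
    funext y; linarith [cdf_add h x y]
  rw [this]
  simpa using (tendsto_const_nhds (x := (1:ℝ))).sub h1

lemma cdf_cont {B : ℝ → ℝ → ℝ} (h : MK B) (x : ℝ) : Continuous (fun y => obsCdf B y x) := by
  have : (fun y => obsCdf B y x) = fun y => obsCdf B 0 x + ∫ t in (0:ℝ)..y, B x t := by
    funext y
    have := intervalIntegral.integral_Iic_sub_Iic (f := B x) (μ := volume) (a := 0) (b := y)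
      (h.int x).integrableOn (h.int x).integrableOn
    unfold obsCdf
    linarith
  rw [this]
  exact continuous_const.add
    (intervalIntegral.continuous_primitive (fun a b => (h.int x).intervalIntegrable) 0)

lemma cdf_nn {B : ℝ → ℝ → ℝ} (h : MK B) (x : ℝ) (y : ℝ) : 0 ≤ obsCdf B y x := by
  unfold obsCdf
  exact integral_nonneg fun t => h.nn x t

lemma ccdf_nn {B : ℝ → ℝ → ℝ} (h : MK B) (x : ℝ) (y : ℝ) : 0 ≤ ∫ t in Set.Ioi y, B x t :=
  integral_nonneg fun t => h.nn x t

structure Good (θ : ℝ) (h : ℝ → ℝ) : Prop where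
  meas : Measurable h
  int : Integrable h
  neg : ∀ x, x ≤ θ → h x ≤ 0
  pos : ∀ x, θ ≤ x → 0 ≤ h x

lemma ofReal_setInt_le {Y : Type*} [MeasureSpace Y] {H : Y → ℝ} (hH : Integrable H) (S : Set Y) :
    ENNReal.ofReal (∫ y in S, H y) ≤ ∫⁻ y, ENNReal.ofReal (H y) := by
  have hi : Integrable (fun y => max (H y) 0) := hH.pos_part
  have h1 : ∫ y in S, H y ≤ ∫ y in S, max (H y) 0 :=
    integral_mono hH.integrableOn hi.integrableOn (fun y => le_max_left _ _)
  have h2 : ∫ y in S, max (H y) 0 ≤ ∫ y, max (H y) 0 :=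
    setIntegral_le_integral hi (Eventually.of_forall fun y => le_max_right _ _)
  refine (ENNReal.ofReal_le_ofReal (h1.trans h2)).trans ?_
  rw [ofReal_integral_eq_lintegral_ofReal hi (Eventually.of_forall fun y => le_max_right _ _)]
  simp

lemma one_dim {B₁ B₂ : ℝ → ℝ → ℝ} (h₁ : MK B₁) (h₂ : MK B₂)
    (hA1₁ : ∀ x x' y y' : ℝ, x ≤ x' → y ≤ y' → B₁ x y' * B₁ x' y ≤ B₁ x y * B₁ x' y')
    (hA2 : ∀ ybar y : ℝ,
      SingleCrossing (fun x : ℝ => obsCdf B₁ ybar x - obsCdf B₂ y x))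
    {θ : ℝ} {h : ℝ → ℝ} (hg : Good θ h) :
    ∫⁻ y, ENNReal.ofReal (∫ x, h x * B₁ x y) ≤ ∫⁻ y, ENNReal.ofReal (∫ x, h x * B₂ x y) := by
  set H₁ : ℝ → ℝ := fun y => ∫ x, h x * B₁ x y with hH₁
  set H₂ : ℝ → ℝ := fun y => ∫ x, h x * B₂ x y with hH₂
  have i₁ : Integrable H₁ := h₁.marg hg.meas hg.int
  have i₂ : Integrable H₂ := h₂.marg hg.meas hg.int
  -- basic TP2 inequality
  have tp : ∀ y y', y ≤ y' → Integrable (fun x => h x * B₁ x y) →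
      Integrable (fun x => h x * B₁ x y') → B₁ θ y' * H₁ y ≤ B₁ θ y * H₁ y' := by
    intro y y' hyy iy iy'
    rw [hH₁]
    simp only
    rw [← integral_const_mul, ← integral_const_mul]
    refine integral_mono (iy.const_mul _) (iy'.const_mul _) fun x => ?_
    simp only
    rcases le_total x θ with hx | hx
    · have a := hA1₁ x θ y y' hx hyy
      have b := hg.neg x hx
      nlinarith
    · have a := hA1₁ θ x y y' hx hyy
      have b := hg.pos x hx
      nlinarith
  have ne_int : ∀ y, H₁ y ≠ 0 → Integrable (fun x => h x * B₁ x y) := by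
    intro y hy
    by_contra hc
    exact hy (integral_undef hc)
  -- a good point
  obtain ⟨p, hpi, hp⟩ : ∃ p, Integrable (fun x => h x * B₁ x p) ∧ 0 < B₁ θ p := by
    by_contra! hc
    have : (B₁ θ) =ᵐ[volume] 0 := by
      filter_upwards [h₁.ae hg.meas hg.int] with y hy
      exact le_antisymm (hc y hy) (h₁.nn _ _)
    have h0 := h₁.one θ
    rw [integral_congr_ae this] at h0
    simp at h0
  have sc : ∀ y y', y < y' → 0 < H₁ y → 0 ≤ H₁ y' := by
    intro y y' hyy hy
    by_contra! hy'
    have iy := ne_int y hy.ne'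
    have iy' := ne_int y' hy'.ne
    have t := tp y y' hyy.le iy iy'
    have n1 := h₁.nn θ y
    have n2 := h₁.nn θ y'
    have z2 : B₁ θ y' = 0 := by
      by_contra hne
      have : 0 < B₁ θ y' := lt_of_le_of_ne n2 (Ne.symm hne)
      nlinarith [mul_pos this hy]
    have z1 : B₁ θ y = 0 := by
      by_contra hne
      have : 0 < B₁ θ y := lt_of_le_of_ne n1 (Ne.symm hne)
      rw [z2] at t
      nlinarith
    rcases le_total p y' with hpy | hpy
    · have := tp p y' hpy hpi iy'
      rw [z2] at this
      nlinarith
    · have := tp y p (hyy.le.trans hpy) iy hpi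
      rw [z1] at this
      nlinarith
  by_cases hex : ∃ y, 0 < H₁ y
  swap
  · push Not at hex
    have : ∫⁻ y, ENNReal.ofReal (H₁ y) = 0 := by
      simp [ENNReal.ofReal_of_nonpos (hex _)]
    rw [this]
    exact zero_le
  have htot : ENNReal.ofReal (∫ x, h x) ≤ ∫⁻ y, ENNReal.ofReal (H₂ y) := by
    have := ofReal_setInt_le i₂ Set.univ
    rwa [setIntegral_univ, h₂.total hg.meas hg.int] at this
  by_cases hbd : BddBelow {y | 0 < H₁ y}
  swap
  · have hall : ∀ y, 0 ≤ H₁ y := by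
      intro y
      rw [not_bddBelow_iff] at hbd
      obtain ⟨z, hz, hzy⟩ := hbd y
      exact sc z y hzy hz
    rw [← ofReal_integral_eq_lintegral_ofReal i₁ (Eventually.of_forall hall),
      h₁.total hg.meas hg.int]
    exact htot
  set c := sInf {y | 0 < H₁ y} with hc
  have up : ∀ y ∈ Set.Ioi c, 0 ≤ H₁ y := by
    intro y hy
    obtain ⟨z, hz, hzy⟩ := exists_lt_of_csInf_lt hex hy
    exact sc z y hzy hz
  have dn : ∀ y, y < c → H₁ y ≤ 0 := by
    intro y hy
    by_contra! hcon
    exact absurd (csInf_le hbd hcon) (not_le.mpr hy)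
  have key : ∫⁻ y, ENNReal.ofReal (H₁ y) = ENNReal.ofReal (∫ x, h x * ∫ t in Set.Ioi c, B₁ x t) := by
    rw [← h₁.setInt hg.meas hg.int (Set.Ioi c),
      ofReal_integral_eq_lintegral_ofReal i₁.integrableOn
        ((ae_restrict_iff' measurableSet_Ioi).mpr (Eventually.of_forall up)),
      ← lintegral_indicator measurableSet_Ioi]
    refine lintegral_congr_ae ?_
    have : ∀ᵐ y : ℝ, y ≠ c := by simp [ae_iff]
    filter_upwards [this] with y hy
    rcases lt_or_gt_of_ne hy with hlt | hgt
    · rw [Set.indicator_of_notMem (by simp [hlt.le]), ENNReal.ofReal_of_nonpos (dn y hlt)]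
    · rw [Set.indicator_of_mem (by exact hgt)]
  rw [key]
  have bd : ∀ x, ∀ y, 0 ≤ obsCdf B₁ y x ∧ obsCdf B₁ y x ≤ 1 := fun x y =>
    ⟨cdf_nn h₁ x y, by linarith [cdf_add h₁ x y, ccdf_nn h₁ x y]⟩
  have bd₂ : ∀ x, ∀ y, 0 ≤ obsCdf B₂ y x ∧ obsCdf B₂ y x ≤ 1 := fun x y =>
    ⟨cdf_nn h₂ x y, by linarith [cdf_add h₂ x y, ccdf_nn h₂ x y]⟩
  have intS : ∀ {B : ℝ → ℝ → ℝ}, MK B → ∀ y, Integrable (fun x => h x * ∫ t in Set.Ioi y, B x t) := by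
    intro B hB y
    have h1 : Integrable (fun p : ℝ × ℝ => h p.1 * B p.1 p.2)
        ((volume : Measure ℝ).prod (volume.restrict (Set.Ioi y))) := by
      refine (hB.joint hg.meas hg.int).mono_measure ?_
      exact Measure.prod_mono le_rfl Measure.restrict_le_self
    have := h1.integral_prod_left
    simpa only [integral_const_mul] using this
  have c1 : ∀ x, ∫ t in Set.Ioi c, B₁ x t = 1 - obsCdf B₁ c x := fun x => by
    linarith [cdf_add h₁ x c]
  rcases (bd θ c).1.eq_or_lt with h0 | h0
  · -- F₁(c|θ)=0
    refine (ENNReal.ofReal_le_ofReal ?_).trans htot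
    refine integral_mono (intS h₁ c) hg.int fun x => ?_
    simp only
    rw [c1]
    rcases lt_or_ge x θ with hx | hx
    · have : obsCdf B₁ c x ≤ 0 := by
        refine ge_of_tendsto (cdf_bot h₂ x) (Eventually.of_forall fun y => ?_)
        have := (hA2 c y hx).2 (by simp only; linarith [(bd₂ θ y).1])
        simp only at this
        linarith
      have e : obsCdf B₁ c x = 0 := le_antisymm this (bd x c).1
      rw [e]; simp
    · nlinarith [hg.pos x hx, (bd x c).1]
  rcases (bd θ c).2.eq_or_lt with h1 | h1
  · refine le_trans (le_of_eq ?_) zero_le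
    refine ENNReal.ofReal_of_nonpos (integral_nonpos fun x => ?_)
    simp only [Pi.zero_apply]
    rw [c1]
    rcases le_or_gt x θ with hx | hx
    · nlinarith [hg.neg x hx, (bd x c).2]
    · have : 1 ≤ obsCdf B₁ c x := by
        refine le_of_tendsto (cdf_top h₂ x) (Eventually.of_forall fun y => ?_)
        have := (hA2 c y hx).1 (by simp only; linarith [(bd₂ θ y).2])
        simp only at this
        linarith
      have e : obsCdf B₁ c x = 1 := le_antisymm (bd x c).2 this
      rw [e]; simp
  · obtain ⟨y, hy⟩ : ∃ y, obsCdf B₂ y θ = obsCdf B₁ c θ := by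
      obtain ⟨a, ha⟩ := ((cdf_bot h₂ θ).eventually (gt_mem_nhds h0)).exists
      obtain ⟨b, hb⟩ := ((cdf_top h₂ θ).eventually (lt_mem_nhds h1)).exists
      exact mem_range_of_exists_le_of_exists_ge (cdf_cont h₂ θ) ⟨a, ha.le⟩ ⟨b, hb.le⟩
    refine le_trans (ENNReal.ofReal_le_ofReal ?_) (ofReal_setInt_le i₂ (Set.Ioi y))
    rw [hH₂, h₂.setInt hg.meas hg.int]
    refine integral_mono (intS h₁ c) (intS h₂ y) fun x => ?_
    simp only
    have c2 : ∫ t in Set.Ioi y, B₂ x t = 1 - obsCdf B₂ y x := by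
      linarith [cdf_add h₂ x y]
    rw [c1, c2]
    rcases lt_trichotomy x θ with hx | hx | hx
    · have := (hA2 c y hx).2 (by simp only; linarith)
      simp only at this
      nlinarith [hg.neg x hx.le]
    · rw [hx, hy]
    · have := (hA2 c y hx).1 (by simp only; linarith)
      simp only at this
      nlinarith [hg.pos x hx.le]

lemma MK.prod {B : ℝ → ℝ → ℝ} (h : MK B) (n : ℕ) :
    MK (fun (x : ℝ) (ys : Fin n → ℝ) => ∏ t, B x (ys t)) where
  meas := by
    have : (Function.uncurry fun (x : ℝ) (ys : Fin n → ℝ) => ∏ t, B x (ys t)) =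
      fun p => ∏ t, (Function.uncurry B) (p.1, p.2 t) := rfl
    rw [this]
    refine Finset.measurable_fun_prod _ fun t _ => h.meas.comp ?_
    fun_prop
  nn x y := Finset.prod_nonneg fun t _ => h.nn _ _
  one x := by
    rw [integral_fintype_prod_volume_eq_prod (fun _ => B x)]
    simp [h.one]

lemma Good.mul {θ : ℝ} {h f : ℝ → ℝ} (hg : Good θ h) (hfm : Measurable f) (hf : ∀ x, 0 ≤ f x)
    (hi : Integrable (fun x => h x * f x)) : Good θ (fun x => h x * f x) where
  meas := hg.meas.mul hfm
  int := hi
  neg x hx := mul_nonpos_of_nonpos_of_nonneg (hg.neg x hx) (hf x)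
  pos x hx := mul_nonneg (hg.pos x hx) (hf x)

lemma n_dim {B₁ B₂ : ℝ → ℝ → ℝ} (h₁ : MK B₁) (h₂ : MK B₂)
    (hA1₁ : ∀ x x' y y' : ℝ, x ≤ x' → y ≤ y' → B₁ x y' * B₁ x' y ≤ B₁ x y * B₁ x' y')
    (hA2 : ∀ ybar y : ℝ,
      SingleCrossing (fun x : ℝ => obsCdf B₁ ybar x - obsCdf B₂ y x))
    {θ : ℝ} (n : ℕ) : ∀ {h : ℝ → ℝ}, Good θ h →
    ∫⁻ ys : Fin n → ℝ, ENNReal.ofReal (∫ x, h x * ∏ t, B₁ x (ys t)) ≤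
      ∫⁻ ys : Fin n → ℝ, ENNReal.ofReal (∫ x, h x * ∏ t, B₂ x (ys t)) := by
  induction n with
  | zero => intro h _; simp
  | succ n ih =>
    intro h hg
    have split : ∀ {B : ℝ → ℝ → ℝ}, MK B →
        ∫⁻ ys : Fin (n+1) → ℝ, ENNReal.ofReal (∫ x, h x * ∏ t, B x (ys t)) =
        ∫⁻ p : ℝ × (Fin n → ℝ), ENNReal.ofReal (∫ x, h x * (B x p.1 * ∏ t, B x (p.2 t))) := by
      intro B hB
      rw [← (volume_preserving_piFinSuccAbove (fun _ : Fin (n+1) => ℝ) 0).lintegral_comp_emb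
        (MeasurableEquiv.measurableEmbedding _)]
      refine lintegral_congr fun ys => ?_
      simp only [Fin.prod_univ_succ]
      rfl
    have meas : ∀ {B B' : ℝ → ℝ → ℝ}, MK B → MK B' →
        Measurable fun p : ℝ × (Fin n → ℝ) =>
          ENNReal.ofReal (∫ x, h x * (B x p.1 * ∏ t, B' x (p.2 t))) := by
      intro B B' hB hB'
      have hm : Measurable (fun q : (ℝ × (Fin n → ℝ)) × ℝ =>
          h q.2 * (B q.2 q.1.1 * ∏ t, B' q.2 (q.1.2 t))) := by
        refine (hg.meas.comp measurable_snd).mul (Measurable.mul ?_ ?_)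
        · exact hB.meas.comp (g := Function.uncurry B)
            (f := fun q : (ℝ × (Fin n → ℝ)) × ℝ => (q.2, q.1.1)) (by fun_prop)
        · exact (hB'.prod n).meas.comp (f := fun q : (ℝ × (Fin n → ℝ)) × ℝ => (q.2, q.1.2))
            (by fun_prop)
      exact (hm.stronglyMeasurable.integral_prod_right (ν := volume)).measurable.ennreal_ofReal
    rw [split h₁, split h₂]
    rw [Measure.volume_eq_prod]
    rw [lintegral_prod _ (meas h₁ h₁).aemeasurable]
    calc ∫⁻ y : ℝ, ∫⁻ ys : Fin n → ℝ,
          ENNReal.ofReal (∫ x, h x * (B₁ x y * ∏ t, B₁ x (ys t)))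
        ≤ ∫⁻ y : ℝ, ∫⁻ ys : Fin n → ℝ,
          ENNReal.ofReal (∫ x, h x * (B₁ x y * ∏ t, B₂ x (ys t))) := by
          refine lintegral_mono_ae ?_
          filter_upwards [h₁.ae hg.meas hg.int] with y hy
          simp only [← mul_assoc]
          exact ih (hg.mul (h₁.meas.comp (measurable_id.prodMk measurable_const))
            (fun x => h₁.nn x y) hy)
      _ = ∫⁻ ys : Fin n → ℝ, ∫⁻ y : ℝ,
          ENNReal.ofReal (∫ x, h x * (B₁ x y * ∏ t, B₂ x (ys t))) :=
          lintegral_lintegral_swap (meas h₁ h₂).aemeasurable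
      _ ≤ ∫⁻ ys : Fin n → ℝ, ∫⁻ y : ℝ,
          ENNReal.ofReal (∫ x, h x * (B₂ x y * ∏ t, B₂ x (ys t))) := by
          refine lintegral_mono_ae ?_
          filter_upwards [(h₂.prod n).ae hg.meas hg.int] with ys hys
          have := one_dim h₁ h₂ hA1₁ hA2 (hg.mul (f := fun x => ∏ t, B₂ x (ys t))
            ((h₂.prod n).meas.comp (measurable_id.prodMk measurable_const))
            (fun x => (h₂.prod n).nn x ys) hys)
          simpa only [mul_assoc, mul_comm, mul_left_comm] using this
      _ = ∫⁻ p : ℝ × (Fin n → ℝ), ENNReal.ofReal (∫ x, h x * (B₂ x p.1 * ∏ t, B₂ x (p.2 t)))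
          ∂((volume : Measure ℝ).prod volume) := by
          rw [lintegral_prod_symm _ (meas h₂ h₂).aemeasurable]

/-- tangent line at `t`. -/
def tang (φ s : ℝ → ℝ) (t m : ℝ) : ℝ := φ t + s t * (m - t)

/-- hinge approximation. -/
def psi (φ s : ℝ → ℝ) (t : ℕ → ℝ) (N : ℕ) (m : ℝ) : ℝ :=
  tang φ s (t 0) m + ∑ j ∈ Finset.range N, max (tang φ s (t (j+1)) m - tang φ s (t j) m) 0

lemma psi_succ (φ s : ℝ → ℝ) (t : ℕ → ℝ) (N : ℕ) (m : ℝ) :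
    psi φ s t (N+1) m = psi φ s t N m + max (tang φ s (t (N+1)) m - tang φ s (t N) m) 0 := by
  unfold psi
  rw [Finset.sum_range_succ]; ring

lemma psi_ge_last (φ s : ℝ → ℝ) (t : ℕ → ℝ) (N : ℕ) (m : ℝ) :
    tang φ s (t N) m ≤ psi φ s t N m := by
  induction N with
  | zero => simp [psi]
  | succ N ih =>
    rw [psi_succ]
    linarith [le_max_left (tang φ s (t (N+1)) m - tang φ s (t N) m) 0]

lemma psi_ge (φ s : ℝ → ℝ) (t : ℕ → ℝ) (N i : ℕ) (hi : i ≤ N) (m : ℝ) :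
    tang φ s (t i) m ≤ psi φ s t N m := by
  induction N, hi using Nat.le_induction with
  | base => exact psi_ge_last φ s t i m
  | succ N _ ih =>
    rw [psi_succ]
    linarith [le_max_right (tang φ s (t (N+1)) m - tang φ s (t N) m) 0]

lemma subgrad_mono {φ s : ℝ → ℝ} (hs : ∀ t m, tang φ s t m ≤ φ m) : Monotone s := by
  intro a b hab
  rcases hab.eq_or_lt with rfl | hab
  · exact le_rfl
  have h1 := hs a b
  have h2 := hs b a
  unfold tang at h1 h2
  nlinarith

lemma tang_up {φ s : ℝ → ℝ} (hs : ∀ t m, tang φ s t m ≤ φ m) {a b m : ℝ} (hab : a ≤ b)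
    (hm : b ≤ m) : tang φ s a m ≤ tang φ s b m := by
  have h1 := hs a b
  have h2 := subgrad_mono hs hab
  unfold tang at *
  nlinarith

lemma tang_dn {φ s : ℝ → ℝ} (hs : ∀ t m, tang φ s t m ≤ φ m) {a b m : ℝ} (hab : a ≤ b)
    (hm : m ≤ a) : tang φ s b m ≤ tang φ s a m := by
  have h1 := hs b a
  have h2 := subgrad_mono hs hab
  unfold tang at *
  nlinarith

lemma psi_eq {φ s : ℝ → ℝ} (hs : ∀ t m, tang φ s t m ≤ φ m) {t : ℕ → ℝ} (ht : Monotone t)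
    (N : ℕ) (m : ℝ) (hm : t N ≤ m) : psi φ s t N m = tang φ s (t N) m := by
  induction N with
  | zero => simp [psi]
  | succ N ih =>
    have h1 := ht (Nat.le_succ N)
    rw [psi_succ, ih (h1.trans hm), max_eq_left]
    · ring
    · linarith [tang_up hs h1 hm]

lemma psi_le {φ s : ℝ → ℝ} (hs : ∀ t m, tang φ s t m ≤ φ m) {t : ℕ → ℝ} (ht : Monotone t)
    (N : ℕ) (m : ℝ) : psi φ s t N m ≤ φ m := by
  induction N with
  | zero => simpa [psi] using hs _ _
  | succ N ih =>
    have h1 := ht (Nat.le_succ N)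
    rw [psi_succ]
    rcases le_total m (t N) with hm | hm
    · rw [max_eq_right]
      · linarith
      · linarith [tang_dn hs h1 hm]
    · rw [psi_eq hs ht N m hm]
      have a1 := hs (t N) m
      have a2 := hs (t (N+1)) m
      rcases max_cases (tang φ s (t (N+1)) m - tang φ s (t N) m) 0 with h | h <;> linarith

lemma exists_subgrad {φ : ℝ → ℝ} (hφ : ConvexOn ℝ Set.univ φ) :
    ∃ s : ℝ → ℝ, ∀ t m, tang φ s t m ≤ φ m := by
  refine ⟨fun t => derivWithin φ (Set.Ioi t) t, fun t m => ?_⟩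
  unfold tang
  have it : t ∈ interior (Set.univ : Set ℝ) := by simp
  rcases lt_trichotomy t m with h | h | h
  · have := hφ.rightDeriv_le_slope_of_mem_interior it (Set.mem_univ m) h
    rw [slope_def_field, le_div_iff₀ (by linarith)] at this
    linarith
  · subst h; simp
  · have h1 := hφ.slope_le_leftDeriv_of_mem_interior (Set.mem_univ m) it h
    have h2 := hφ.leftDeriv_le_rightDeriv_of_mem_interior it
    have := h1.trans h2
    rw [slope_def_field, div_le_iff₀ (by linarith)] at this
    linarith

/-- the grid -/
noncomputable def grid (n : ℕ) (j : ℕ) : ℝ := -((n:ℝ)+1) + j / ((n:ℝ)+1)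

lemma grid_mono (n : ℕ) : Monotone (grid n) := by
  intro a b hab
  unfold grid
  have : (a:ℝ) ≤ b := by exact_mod_cast hab
  gcongr

lemma psi_tendsto {φ s : ℝ → ℝ} (hs : ∀ t m, tang φ s t m ≤ φ m) (m : ℝ) :
    Tendsto (fun n => psi φ s (grid n) (2 * (n+1)^2) m) atTop (𝓝 (φ m)) := by
  have hlow : Tendsto (fun n : ℕ => φ m - (s m - s (m - 1)) * (1 / ((n:ℝ) + 1))) atTop
      (𝓝 (φ m)) := by
    have := (tendsto_one_div_add_atTop_nhds_zero_nat (𝕜 := ℝ)).const_mul (s m - s (m-1))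
    simpa using (tendsto_const_nhds (x := φ m)).sub this
  refine tendsto_of_tendsto_of_tendsto_of_le_of_le' hlow tendsto_const_nhds ?_
    (Eventually.of_forall fun n => psi_le hs (grid_mono n) _ m)
  obtain ⟨n0, hn0⟩ := exists_nat_ge (|m|)
  filter_upwards [eventually_ge_atTop n0] with n hn
  set K : ℝ := (n:ℝ) + 1 with hK
  have hKpos : 1 ≤ K := by rw [hK]; linarith [Nat.cast_nonneg (α := ℝ) n]
  have hmK : |m| ≤ K := by
    have : (n0:ℝ) ≤ n := by exact_mod_cast hn
    linarith
  obtain ⟨hm1, hm2⟩ := abs_le.mp hmK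
  have hpos : 0 ≤ (m + K) * K := by nlinarith
  set i := ⌊(m + K) * K⌋₊ with hi
  have hiN : i ≤ 2 * (n+1)^2 := by
    apply Nat.floor_le_of_le
    push_cast
    rw [← hK]
    nlinarith
  have f1 : (i:ℝ) ≤ (m+K)*K := Nat.floor_le hpos
  have f2 : (m+K)*K < i + 1 := Nat.lt_floor_add_one _
  have hg : grid n i = -K + i / K := rfl
  have g1 : grid n i ≤ m := by
    rw [hg]
    have : (i:ℝ)/K ≤ m + K := by rw [div_le_iff₀ (by linarith)]; exact f1
    linarith
  have g2 : m - grid n i ≤ 1 / K := by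
    rw [hg]
    have : m + K ≤ (i:ℝ)/K + 1/K := by
      rw [← add_div, le_div_iff₀ (by linarith)]; exact f2.le
    linarith
  have g3 : 1 / K ≤ 1 := by rw [div_le_one (by linarith)]; exact hKpos
  refine le_trans ?_ (psi_ge φ s (grid n) _ i hiN m)
  have h1 := hs m (grid n i)
  have h2 : s (m-1) ≤ s (grid n i) := subgrad_mono hs (by linarith)
  have h3 : s (grid n i) ≤ s m := subgrad_mono hs g1
  unfold tang at *
  nlinarith [mul_nonneg (sub_nonneg.mpr h2) (sub_nonneg.mpr g1),
    mul_le_mul_of_nonneg_left g2 (sub_nonneg.mpr (h2.trans h3))]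

lemma convex_order {Y : Type*} [MeasureSpace Y] {m₁ m₂ σ₁ σ₂ : Y → ℝ}
    (p₁ : ∀ y, 0 ≤ σ₁ y) (p₂ : ∀ y, 0 ≤ σ₂ y) (i₁ : Integrable σ₁) (i₂ : Integrable σ₂)
    (j₁ : Integrable fun y => m₁ y * σ₁ y) (j₂ : Integrable fun y => m₂ y * σ₂ y)
    (e0 : ∫ y, σ₁ y = ∫ y, σ₂ y) (e1 : ∫ y, m₁ y * σ₁ y = ∫ y, m₂ y * σ₂ y)
    (hh : ∀ a b : ℝ, 0 ≤ b →
      ∫ y, max (a + b * m₁ y) 0 * σ₁ y ≤ ∫ y, max (a + b * m₂ y) 0 * σ₂ y)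
    {φ : ℝ → ℝ} (hφ : ConvexOn ℝ Set.univ φ)
    (q₁ : Integrable fun y => φ (m₁ y) * σ₁ y) (q₂ : Integrable fun y => φ (m₂ y) * σ₂ y) :
    ∫ y, φ (m₁ y) * σ₁ y ≤ ∫ y, φ (m₂ y) * σ₂ y := by
  obtain ⟨s, hs⟩ := exists_subgrad hφ
  have sm := subgrad_mono hs
  have aff : ∀ {m σ : Y → ℝ}, Integrable σ → (Integrable fun y => m y * σ y) → ∀ a b : ℝ,
      Integrable fun y => (a + b * m y) * σ y := by
    intro m σ i j a b
    have := (i.const_mul a).add (j.const_mul b)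
    refine this.congr (Eventually.of_forall fun y => ?_)
    simp only [Pi.add_apply]; ring
  have hin : ∀ {m σ : Y → ℝ}, (∀ y, 0 ≤ σ y) → Integrable σ → (Integrable fun y => m y * σ y) →
      ∀ a b : ℝ, Integrable fun y => max (a + b * m y) 0 * σ y := by
    intro m σ p i j a b
    refine (aff i j a b).pos_part.congr (Eventually.of_forall fun y => ?_)
    simp only
    rw [max_mul_of_nonneg _ _ (p y), zero_mul]
  have tdiff : ∀ t t' m, tang φ s t' m - tang φ s t m =
      (φ t' - s t' * t' - (φ t - s t * t)) + (s t' - s t) * m := by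
    intro t t' m; unfold tang; ring
  have tang' : ∀ t m, tang φ s t m = (φ t - s t * t) + s t * m := by
    intro t m; unfold tang; ring
  have psi' : ∀ t N m σ, psi φ s t N m * σ = ((φ (t 0) - s (t 0) * (t 0)) + s (t 0) * m) * σ +
      ∑ j ∈ Finset.range N, max ((φ (t (j+1)) - s (t (j+1)) * t (j+1) - (φ (t j) - s (t j) * t j))
        + (s (t (j+1)) - s (t j)) * m) 0 * σ := by
    intro t N m σ
    unfold psi
    simp only [tdiff]
    rw [tang', add_mul, Finset.sum_mul]
  have psi_int : ∀ {m σ : Y → ℝ}, (∀ y, 0 ≤ σ y) → Integrable σ →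
      (Integrable fun y => m y * σ y) → ∀ t N, Integrable fun y => psi φ s t N (m y) * σ y := by
    intro m σ p i j t N
    simp only [psi']
    exact (aff i j _ _).add (integrable_finsetSum _ fun k _ => hin p i j _ _)
  have psi_val : ∀ {m σ : Y → ℝ}, (∀ y, 0 ≤ σ y) → Integrable σ →
      (Integrable fun y => m y * σ y) → ∀ t N, ∫ y, psi φ s t N (m y) * σ y =
      ((φ (t 0) - s (t 0) * (t 0)) * ∫ y, σ y) + s (t 0) * (∫ y, m y * σ y) +
      ∑ j ∈ Finset.range N, ∫ y, max ((φ (t (j+1)) - s (t (j+1)) * t (j+1) -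
        (φ (t j) - s (t j) * t j)) + (s (t (j+1)) - s (t j)) * m y) 0 * σ y := by
    intro m σ p i j t N
    simp only [psi']
    rw [integral_add (aff i j _ _) (integrable_finsetSum _ fun k _ => hin p i j _ _),
      integral_finsetSum _ fun k _ => hin p i j _ _]
    congr 1
    rw [← integral_const_mul, ← integral_const_mul,
      ← integral_add (i.const_mul _) (j.const_mul _)]
    refine integral_congr_ae (Eventually.of_forall fun y => ?_)
    simp only; ring
  have le_n : ∀ n : ℕ, ∫ y, psi φ s (grid n) (2 * (n+1)^2) (m₁ y) * σ₁ y ≤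
      ∫ y, φ (m₂ y) * σ₂ y := by
    intro n
    have h1 : ∫ y, psi φ s (grid n) (2 * (n+1)^2) (m₁ y) * σ₁ y ≤
        ∫ y, psi φ s (grid n) (2 * (n+1)^2) (m₂ y) * σ₂ y := by
      rw [psi_val p₁ i₁ j₁, psi_val p₂ i₂ j₂, e0, e1]
      refine add_le_add le_rfl (Finset.sum_le_sum fun k _ => ?_)
      exact hh _ _ (sub_nonneg.mpr (sm (grid_mono n (Nat.le_succ k))))
    refine h1.trans (integral_mono (psi_int p₂ i₂ j₂ _ _) q₂ fun y => ?_)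
    exact mul_le_mul_of_nonneg_right (psi_le hs (grid_mono n) _ _) (p₂ y)
  refine le_of_tendsto (f := fun n : ℕ => ∫ y, psi φ s (grid n) (2 * (n+1)^2) (m₁ y) * σ₁ y)
    (x := atTop) ?_ (Eventually.of_forall le_n)
  refine tendsto_integral_of_dominated_convergence
    (fun y => ‖φ (m₁ y) * σ₁ y‖ + ‖(φ 0 + s 0 * m₁ y) * σ₁ y‖)
    (fun n => (psi_int p₁ i₁ j₁ _ _).aestronglyMeasurable)
    (q₁.norm.add (aff i₁ j₁ _ _).norm) ?_ ?_
  · intro n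
    refine Eventually.of_forall fun y => ?_
    have u1 := mul_le_mul_of_nonneg_right (psi_le hs (grid_mono n) (2 * (n+1)^2) (m₁ y)) (p₁ y)
    have g0 : grid n ((n+1)^2) = 0 := by
      unfold grid
      have : (n:ℝ) + 1 ≠ 0 := by positivity
      push_cast
      field_simp
      ring
    have u2 := psi_ge φ s (grid n) (2 * (n+1)^2) ((n+1)^2) (by omega) (m₁ y)
    rw [g0] at u2
    have u3 := mul_le_mul_of_nonneg_right u2 (p₁ y)
    simp only [tang, sub_zero] at u3
    rw [Real.norm_eq_abs, Real.norm_eq_abs, Real.norm_eq_abs, abs_le]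
    constructor
    · linarith [neg_abs_le ((φ 0 + s 0 * m₁ y) * σ₁ y), abs_nonneg (φ (m₁ y) * σ₁ y)]
    · linarith [le_abs_self (φ (m₁ y) * σ₁ y), abs_nonneg ((φ 0 + s 0 * m₁ y) * σ₁ y)]
  · exact Eventually.of_forall fun y => (psi_tendsto hs (m₁ y)).mul_const _

/-- **Global convex dominance for continuous-state Bayesian localization.**
Under (A1) TP2, (A2) single crossing and (SMA), for every horizon `k ≥ 1`,
every prior density `π₀` (with finite second moment) and every convex `φ` for
which the integrals exist,
`∫ φ(m₁) σ₁ ≤ ∫ φ(m₂) σ₂`; in particular `MSE(m₁) ≥ MSE(m₂)`. -/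
theorem stmt_2 (B₁ B₂ : ℝ → ℝ → ℝ)
    (hB₁m : Measurable (Function.uncurry B₁)) (hB₂m : Measurable (Function.uncurry B₂))
    (hB₁nn : ∀ x y, 0 ≤ B₁ x y) (hB₂nn : ∀ x y, 0 ≤ B₂ x y)
    (hB₁int : ∀ x, ∫ y, B₁ x y = 1) (hB₂int : ∀ x, ∫ y, B₂ x y = 1)
    -- (A1): TP2 observation kernels
    (hA1₁ : ∀ x x' y y' : ℝ, x ≤ x' → y ≤ y' → B₁ x y' * B₁ x' y ≤ B₁ x y * B₁ x' y')
    (hA1₂ : ∀ x x' y y' : ℝ, x ≤ x' → y ≤ y' → B₂ x y' * B₂ x' y ≤ B₂ x y * B₂ x' y')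
    -- (A2): single crossing condition
    (hA2 : ∀ ybar y : ℝ,
      SingleCrossing (fun x : ℝ => obsCdf B₁ ybar x - obsCdf B₂ y x))
    -- (SMA): product single crossing of complementary cdfs
    (hSMA : ∀ (j : ℕ), 1 ≤ j → ∀ (ys ybars : Fin j → ℝ),
      SingleCrossing (fun x : ℝ =>
        (∏ t, (1 - obsCdf B₂ (ys t) x)) - ∏ t, (1 - obsCdf B₁ (ybars t) x)))
    -- prior density with finite second moment
    (π₀ : ℝ → ℝ) (hπm : Measurable π₀) (hπnn : ∀ x, 0 ≤ π₀ x) (hπ : ∫ x, π₀ x = 1)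
    (hπ2 : Integrable (fun x => x ^ 2 * π₀ x))
    (k : ℕ) (hk : 1 ≤ k)
    -- normalizers positive and finite
    (hσ₁int : ∀ ys : Fin k → ℝ, Integrable (fun x => π₀ x * ∏ t, B₁ x (ys t)))
    (hσ₂int : ∀ ys : Fin k → ℝ, Integrable (fun x => π₀ x * ∏ t, B₂ x (ys t)))
    (hσ₁pos : ∀ ys : Fin k → ℝ, 0 < nrm B₁ π₀ ys)
    (hσ₂pos : ∀ ys : Fin k → ℝ, 0 < nrm B₂ π₀ ys)
    (hm₁int : ∀ ys : Fin k → ℝ, Integrable (fun x => x * (π₀ x * ∏ t, B₁ x (ys t))))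
    (hm₂int : ∀ ys : Fin k → ℝ, Integrable (fun x => x * (π₀ x * ∏ t, B₂ x (ys t)))) :
    (∀ φ : ℝ → ℝ, ConvexOn ℝ Set.univ φ →
      Integrable (fun ys : Fin k → ℝ => φ (cmean B₁ π₀ ys) * nrm B₁ π₀ ys) →
      Integrable (fun ys : Fin k → ℝ => φ (cmean B₂ π₀ ys) * nrm B₂ π₀ ys) →
      (∫ ys : Fin k → ℝ, φ (cmean B₁ π₀ ys) * nrm B₁ π₀ ys) ≤
        ∫ ys : Fin k → ℝ, φ (cmean B₂ π₀ ys) * nrm B₂ π₀ ys) ∧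
    ((∀ ys : Fin k → ℝ,
        Integrable (fun x => (x - cmean B₁ π₀ ys) ^ 2 * (π₀ x * ∏ t, B₁ x (ys t)))) →
      (∀ ys : Fin k → ℝ,
        Integrable (fun x => (x - cmean B₂ π₀ ys) ^ 2 * (π₀ x * ∏ t, B₂ x (ys t)))) →
      Integrable (fun ys : Fin k → ℝ =>
        ∫ x, (x - cmean B₁ π₀ ys) ^ 2 * (π₀ x * ∏ t, B₁ x (ys t))) →
      Integrable (fun ys : Fin k → ℝ =>
        ∫ x, (x - cmean B₂ π₀ ys) ^ 2 * (π₀ x * ∏ t, B₂ x (ys t))) →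
      mse B₂ π₀ k ≤ mse B₁ π₀ k) := by
  have k₁ : MK B₁ := ⟨hB₁m, hB₁nn, hB₁int⟩
  have k₂ : MK B₂ := ⟨hB₂m, hB₂nn, hB₂int⟩
  have hπi : Integrable π₀ := by
    by_contra hc
    rw [integral_undef hc] at hπ
    norm_num at hπ
  have hxi : Integrable (fun x => x * π₀ x) := by
    refine (hπi.add hπ2).mono' (measurable_id.mul hπm).aestronglyMeasurable
      (Eventually.of_forall fun x => ?_)
    simp only [Pi.add_apply]
    rw [norm_mul, Real.norm_of_nonneg (hπnn x), Real.norm_eq_abs]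
    have : |x| ≤ 1 + x^2 := by
      rcases abs_cases x with h | h <;> nlinarith [sq_nonneg (x-1), sq_nonneg (x+1)]
    nlinarith [hπnn x]
  have hai : ∀ a b : ℝ, Integrable (fun x => (a + b * x) * π₀ x) := by
    intro a b
    refine ((hπi.const_mul a).add (hxi.const_mul b)).congr (Eventually.of_forall fun x => ?_)
    simp only [Pi.add_apply]; ring
  have ham : ∀ a b : ℝ, Measurable (fun x => (a + b * x) * π₀ x) := by
    intro a b; fun_prop
  have hq : Measurable (fun x => x ^ 2 * π₀ x) := by fun_prop
  -- facts for a single sensor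
  have basic : ∀ {B : ℝ → ℝ → ℝ}, MK B →
      (∀ ys : Fin k → ℝ, Integrable (fun x => π₀ x * ∏ t, B x (ys t))) →
      (∀ ys : Fin k → ℝ, 0 < nrm B π₀ ys) →
      (∀ ys : Fin k → ℝ, Integrable (fun x => x * (π₀ x * ∏ t, B x (ys t)))) →
      ∀ (a b : ℝ) (ys : Fin k → ℝ), (∫ x, ((a + b * x) * π₀ x) * ∏ t, B x (ys t)) =
        (a + b * cmean B π₀ ys) * nrm B π₀ ys := by
    intro B _ h1 h2 h3 a b ys
    have : cmean B π₀ ys * nrm B π₀ ys = ∫ x, x * (π₀ x * ∏ t, B x (ys t)) := by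
      unfold cmean
      rw [div_mul_cancel₀ _ (h2 ys).ne']
    rw [add_mul, mul_assoc, this, nrm, ← integral_const_mul, ← integral_const_mul,
      ← integral_add ((h1 ys).const_mul _) ((h3 ys).const_mul _)]
    refine integral_congr_ae (Eventually.of_forall fun x => ?_)
    simp only; ring
  have bas₁ := basic k₁ hσ₁int hσ₁pos hm₁int
  have bas₂ := basic k₂ hσ₂int hσ₂pos hm₂int
  have hinge : ∀ a b : ℝ, 0 ≤ b →
      ∫ ys : Fin k → ℝ, max (a + b * cmean B₁ π₀ ys) 0 * nrm B₁ π₀ ys ≤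
      ∫ ys : Fin k → ℝ, max (a + b * cmean B₂ π₀ ys) 0 * nrm B₂ π₀ ys := by
    intro a b hb
    have r₁ : ∀ ys : Fin k → ℝ, max (a + b * cmean B₁ π₀ ys) 0 * nrm B₁ π₀ ys =
        max (∫ x, ((a + b * x) * π₀ x) * ∏ t, B₁ x (ys t)) 0 := fun ys => by
      rw [bas₁, max_mul_of_nonneg _ _ (hσ₁pos ys).le, zero_mul]
    have r₂ : ∀ ys : Fin k → ℝ, max (a + b * cmean B₂ π₀ ys) 0 * nrm B₂ π₀ ys =
        max (∫ x, ((a + b * x) * π₀ x) * ∏ t, B₂ x (ys t)) 0 := fun ys => by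
      rw [bas₂, max_mul_of_nonneg _ _ (hσ₂pos ys).le, zero_mul]
    rcases hb.eq_or_lt with hb0 | hb0
    · rw [← hb0]
      simp only [zero_mul, add_zero]
      rw [integral_const_mul, integral_const_mul]
      have t₁ := (k₁.prod k).total hπm hπi
      have t₂ := (k₂.prod k).total hπm hπi
      unfold nrm
      rw [t₁, t₂]
    · simp_rw [r₁, r₂]
      have g : Good (-a / b) (fun x => (a + b * x) * π₀ x) := by
        refine ⟨ham a b, hai a b, fun x hx => ?_, fun x hx => ?_⟩
        · rw [le_div_iff₀ hb0] at hx
          exact mul_nonpos_of_nonpos_of_nonneg (by linarith) (hπnn x)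
        · rw [div_le_iff₀ hb0] at hx
          exact mul_nonneg (by linarith) (hπnn x)
      have main := n_dim k₁ k₂ hA1₁ hA2 k g
      have I₁ := ((k₁.prod k).marg (ham a b) (hai a b)).pos_part
      have I₂ := ((k₂.prod k).marg (ham a b) (hai a b)).pos_part
      rw [← ENNReal.ofReal_le_ofReal_iff (integral_nonneg (fun ys => by
        simp only [Pi.zero_apply]; exact le_max_right _ _)),
        ofReal_integral_eq_lintegral_ofReal I₁ (Eventually.of_forall fun ys => le_max_right _ _),
        ofReal_integral_eq_lintegral_ofReal I₂ (Eventually.of_forall fun ys => le_max_right _ _)]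
      simpa using main
  have nrmI₁ : Integrable (fun ys : Fin k → ℝ => nrm B₁ π₀ ys) := (k₁.prod k).marg hπm hπi
  have nrmI₂ : Integrable (fun ys : Fin k → ℝ => nrm B₂ π₀ ys) := (k₂.prod k).marg hπm hπi
  have nrmV₁ : ∫ ys : Fin k → ℝ, nrm B₁ π₀ ys = ∫ x, π₀ x := (k₁.prod k).total hπm hπi
  have nrmV₂ : ∫ ys : Fin k → ℝ, nrm B₂ π₀ ys = ∫ x, π₀ x := (k₂.prod k).total hπm hπi
  have mI₁ : Integrable (fun ys : Fin k → ℝ => cmean B₁ π₀ ys * nrm B₁ π₀ ys) := by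
    have := (k₁.prod k).marg (ham 0 1) (hai 0 1)
    simp only [bas₁] at this
    simpa only [zero_add, one_mul] using this
  have mI₂ : Integrable (fun ys : Fin k → ℝ => cmean B₂ π₀ ys * nrm B₂ π₀ ys) := by
    have := (k₂.prod k).marg (ham 0 1) (hai 0 1)
    simp only [bas₂] at this
    simpa only [zero_add, one_mul] using this
  have mV₁ := (k₁.prod k).total (ham 0 1) (hai 0 1)
  have mV₂ := (k₂.prod k).total (ham 0 1) (hai 0 1)
  simp only [bas₁] at mV₁
  simp only [zero_add, one_mul] at mV₁
  simp only [bas₂] at mV₂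
  simp only [zero_add, one_mul] at mV₂
  have part1 : ∀ φ : ℝ → ℝ, ConvexOn ℝ Set.univ φ →
      Integrable (fun ys : Fin k → ℝ => φ (cmean B₁ π₀ ys) * nrm B₁ π₀ ys) →
      Integrable (fun ys : Fin k → ℝ => φ (cmean B₂ π₀ ys) * nrm B₂ π₀ ys) →
      (∫ ys : Fin k → ℝ, φ (cmean B₁ π₀ ys) * nrm B₁ π₀ ys) ≤
        ∫ ys : Fin k → ℝ, φ (cmean B₂ π₀ ys) * nrm B₂ π₀ ys := fun φ hφ q₁ q₂ =>
    convex_order (fun ys => (hσ₁pos ys).le) (fun ys => (hσ₂pos ys).le) nrmI₁ nrmI₂ mI₁ mI₂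
      (nrmV₁.trans nrmV₂.symm) (mV₁.trans mV₂.symm) hinge hφ q₁ q₂
  refine ⟨part1, fun _ _ M₁ M₂ => ?_⟩
  -- MSE decomposition
  have dec : ∀ {B : ℝ → ℝ → ℝ}, MK B →
      (∀ ys : Fin k → ℝ, Integrable (fun x => π₀ x * ∏ t, B x (ys t))) →
      (∀ (a b : ℝ) (ys : Fin k → ℝ), (∫ x, ((a + b * x) * π₀ x) * ∏ t, B x (ys t)) =
        (a + b * cmean B π₀ ys) * nrm B π₀ ys) →
      (∀ ys : Fin k → ℝ, Integrable (fun x => x * (π₀ x * ∏ t, B x (ys t)))) →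
      Integrable (fun ys : Fin k → ℝ =>
        ∫ x, (x - cmean B π₀ ys) ^ 2 * (π₀ x * ∏ t, B x (ys t))) →
      Integrable (fun ys : Fin k → ℝ => (cmean B π₀ ys) ^ 2 * nrm B π₀ ys) ∧
      mse B π₀ k = (∫ x, x ^ 2 * π₀ x) -
        ∫ ys : Fin k → ℝ, (cmean B π₀ ys) ^ 2 * nrm B π₀ ys := by
    intro B kB h1 bas h3 M
    have X := (kB.prod k).marg hq hπ2
    have V := (kB.prod k).total hq hπ2
    have ae : (fun ys : Fin k → ℝ => (cmean B π₀ ys) ^ 2 * nrm B π₀ ys) =ᵐ[volume]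
        fun ys => (∫ x, (x ^ 2 * π₀ x) * ∏ t, B x (ys t)) -
          ∫ x, (x - cmean B π₀ ys) ^ 2 * (π₀ x * ∏ t, B x (ys t)) := by
      filter_upwards [(kB.prod k).ae hq hπ2] with ys hys
      set c := cmean B π₀ ys with hc
      have e : ∀ x, (x - c) ^ 2 * (π₀ x * ∏ t, B x (ys t)) =
          (x ^ 2 * π₀ x) * ∏ t, B x (ys t) +
            ((c^2 + (-2 * c) * x) * π₀ x) * ∏ t, B x (ys t) := fun x => by ring
      simp_rw [e]
      have i2 : Integrable (fun x => ((c^2 + (-2 * c) * x) * π₀ x) * ∏ t, B x (ys t)) := by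
        refine (((h1 ys).const_mul (c^2)).add ((h3 ys).const_mul (-2*c))).congr
          (Eventually.of_forall fun x => ?_)
        simp only [Pi.add_apply]; ring
      rw [integral_add hys i2, bas, ← hc]
      ring
    have I : Integrable (fun ys : Fin k → ℝ => (cmean B π₀ ys) ^ 2 * nrm B π₀ ys) :=
      (X.sub M).congr ae.symm
    refine ⟨I, ?_⟩
    rw [integral_congr_ae ae, integral_sub X M, V, mse]
    ring
  obtain ⟨I₁, v₁⟩ := dec k₁ hσ₁int bas₁ hm₁int M₁
  obtain ⟨I₂, v₂⟩ := dec k₂ hσ₂int bas₂ hm₂int M₂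
  have hconv : ConvexOn ℝ Set.univ (fun x : ℝ => x ^ 2) := even_two.convexOn_pow
  have := part1 _ hconv I₁ I₂
  rw [v₁, v₂]
  linarith
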